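/- Every GF² sentence is logically equivalent to a Boolean combination of sentences of the form ∀x φ(x), where φ(x) is an openGF² formula. -/

import Mathlib

/-! Core: relational two-variable first-order logic with equality (unary and
binary predicates only), the guarded fragment GF², structures, satisfaction,
atomic types, (bounded/delimited) guarded bisimulations, forest structures. -/

namespace GFC

inductive Var : Type
  | x
  | y
deriving DecidableEq

/-- Formulas of two-variable relational FO with equality (variables `x`, `y`). -/
inductive Fml (U B : Type) : Type
  | uatom : U → Var → Fml U B
  | batom : B → Var → Var → Fml U B
  | eqv   : Var → Var → Fml U B
  | fls   : Fml U B
  | neg   : Fml U B → Fml U B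
  | conj  : Fml U B → Fml U B → Fml U B
  | disj  : Fml U B → Fml U B → Fml U B
  | impl  : Fml U B → Fml U B → Fml U B
  | all   : Var → Fml U B → Fml U B
  | ex    : Var → Fml U B → Fml U B

namespace Fml

variable {U B : Type}

def free : Fml U B → Set Var
  | uatom _ v => {v}
  | batom _ v w => {v, w}
  | eqv v w => {v, w}
  | fls => ∅
  | neg φ => φ.free
  | conj φ ψ => φ.free ∪ ψ.free
  | disj φ ψ => φ.free ∪ ψ.free
  | impl φ ψ => φ.free ∪ ψ.free
  | all v φ => φ.free \ {v}
  | ex v φ => φ.free \ {v}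

def IsSentence (φ : Fml U B) : Prop := φ.free = ∅

def upreds : Fml U B → Set U
  | uatom P _ => {P}
  | batom _ _ _ => ∅
  | eqv _ _ => ∅
  | fls => ∅
  | neg φ => φ.upreds
  | conj φ ψ => φ.upreds ∪ ψ.upreds
  | disj φ ψ => φ.upreds ∪ ψ.upreds
  | impl φ ψ => φ.upreds ∪ ψ.upreds
  | all _ φ => φ.upreds
  | ex _ φ => φ.upreds

def bpreds : Fml U B → Set B
  | uatom _ _ => ∅
  | batom R _ _ => {R}
  | eqv _ _ => ∅
  | fls => ∅
  | neg φ => φ.bpreds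
  | conj φ ψ => φ.bpreds ∪ ψ.bpreds
  | disj φ ψ => φ.bpreds ∪ ψ.bpreds
  | impl φ ψ => φ.bpreds ∪ ψ.bpreds
  | all _ φ => φ.bpreds
  | ex _ φ => φ.bpreds

def IsAtom : Fml U B → Prop
  | uatom _ _ => True
  | batom _ _ _ => True
  | eqv _ _ => True
  | _ => False

def IsEqAtom : Fml U B → Prop
  | eqv _ _ => True
  | _ => False

/-- guarded quantifier depth (in GF² formulas every quantifier is guarded) -/
def gdepth : Fml U B → ℕ
  | uatom _ _ => 0
  | batom _ _ _ => 0
  | eqv _ _ => 0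
  | fls => 0
  | neg φ => φ.gdepth
  | conj φ ψ => max φ.gdepth ψ.gdepth
  | disj φ ψ => max φ.gdepth ψ.gdepth
  | impl φ ψ => max φ.gdepth ψ.gdepth
  | all _ φ => φ.gdepth + 1
  | ex _ φ => φ.gdepth + 1

/-- subformulas (including the formula itself) -/
def Subf : Fml U B → Set (Fml U B)
  | uatom P v => {uatom P v}
  | batom R v w => {batom R v w}
  | eqv v w => {eqv v w}
  | fls => {fls}
  | neg φ => insert (neg φ) φ.Subf
  | conj φ ψ => insert (conj φ ψ) (φ.Subf ∪ ψ.Subf)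
  | disj φ ψ => insert (disj φ ψ) (φ.Subf ∪ ψ.Subf)
  | impl φ ψ => insert (impl φ ψ) (φ.Subf ∪ ψ.Subf)
  | all v φ => insert (all v φ) φ.Subf
  | ex v φ => insert (ex v φ) φ.Subf

/-- rename the free variables along `f` (bound variables untouched) -/
def renameFree : (Var → Var) → Fml U B → Fml U B
  | f, uatom P v => uatom P (f v)
  | f, batom R v w => batom R (f v) (f w)
  | f, eqv v w => eqv (f v) (f w)
  | _, fls => fls
  | f, neg φ => neg (renameFree f φ)
  | f, conj φ ψ => conj (renameFree f φ) (renameFree f ψ)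
  | f, disj φ ψ => disj (renameFree f φ) (renameFree f ψ)
  | f, impl φ ψ => impl (renameFree f φ) (renameFree f ψ)
  | f, all v φ => all v (renameFree (Function.update f v v) φ)
  | f, ex v φ => ex v (renameFree (Function.update f v v) φ)

end Fml

/-- The two-variable guarded fragment GF²: quantification only in the guarded
patterns `∀v (α → φ)` and `∃v (α ∧ φ)` with `α` an atom containing all free
variables of `φ` as well as the quantified variable `v`. -/
inductive IsGF2 {U B : Type} : Fml U B → Prop
  | uatom (P : U) (v : Var) : IsGF2 (.uatom P v)
  | batom (R : B) (v w : Var) : IsGF2 (.batom R v w)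
  | eqv (v w : Var) : IsGF2 (.eqv v w)
  | fls : IsGF2 .fls
  | neg {φ} : IsGF2 φ → IsGF2 (.neg φ)
  | conj {φ ψ} : IsGF2 φ → IsGF2 ψ → IsGF2 (.conj φ ψ)
  | disj {φ ψ} : IsGF2 φ → IsGF2 ψ → IsGF2 (.disj φ ψ)
  | impl {φ ψ} : IsGF2 φ → IsGF2 ψ → IsGF2 (.impl φ ψ)
  | allG {v : Var} {α φ : Fml U B} :
      α.IsAtom → IsGF2 φ → φ.free ∪ {v} ⊆ α.free → IsGF2 (.all v (.impl α φ))
  | exG {v : Var} {α φ : Fml U B} :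
      α.IsAtom → IsGF2 φ → φ.free ∪ {v} ⊆ α.free → IsGF2 (.ex v (.conj α φ))

/-- openGF²: GF² formulas with exactly one free variable, in which equality is
never used as a guard and which contain no subformula that is a sentence. -/
def IsOpenGF2 {U B : Type} (φ : Fml U B) : Prop :=
  IsGF2 φ ∧ (∃ v, φ.free = {v}) ∧
  (∀ ψ ∈ φ.Subf, ¬ ψ.IsSentence) ∧
  (∀ ψ ∈ φ.Subf, ∀ (v : Var) (α χ : Fml U B),
      (ψ = .all v (.impl α χ) ∨ ψ = .ex v (.conj α χ)) → ¬ α.IsEqAtom)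

/-- relational structures interpreting unary predicates `U` and binary
predicates `B` -/
structure Str (U B : Type) where
  Dom : Type
  nonempty : Nonempty Dom
  u : U → Dom → Prop
  b : B → Dom → Dom → Prop

def upd {D : Type} (σ : Var → D) (v : Var) (d : D) : Var → D :=
  fun w => if w = v then d else σ w

def Sat {U B : Type} (A : Str U B) : Fml U B → (Var → A.Dom) → Prop
  | .uatom P v, σ => A.u P (σ v)
  | .batom R v w, σ => A.b R (σ v) (σ w)
  | .eqv v w, σ => σ v = σ w
  | .fls, _ => False
  | .neg φ, σ => ¬ Sat A φ σ
  | .conj φ ψ, σ => Sat A φ σ ∧ Sat A ψ σ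
  | .disj φ ψ, σ => Sat A φ σ ∨ Sat A ψ σ
  | .impl φ ψ, σ => Sat A φ σ → Sat A ψ σ
  | .all v φ, σ => ∀ d : A.Dom, Sat A φ (upd σ v d)
  | .ex v φ, σ => ∃ d : A.Dom, Sat A φ (upd σ v d)

/-- truth of a sentence in a structure -/
def SatS {U B : Type} (A : Str U B) (φ : Fml U B) : Prop := ∀ σ, Sat A φ σ

def Entails {U B : Type} (φ ψ : Fml U B) : Prop :=
  ∀ A : Str U B, SatS A φ → SatS A ψ

def Satisfiable {U B : Type} (φ : Fml U B) : Prop := ∃ A : Str U B, SatS A φ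

/-- a GF²(Σ)-sentence, for the signature Σ = (SU, SB) -/
def IsGF2Sentence {U B : Type} (SU : Set U) (SB : Set B) (ψ : Fml U B) : Prop :=
  IsGF2 ψ ∧ ψ.IsSentence ∧ ψ.upreds ⊆ SU ∧ ψ.bpreds ⊆ SB

/-- `φ₁ ⊨_Σ φ₂` : GF²(Σ)-entailment -/
def GF2Entails {U B : Type} (SU : Set U) (SB : Set B) (φ₁ φ₂ : Fml U B) : Prop :=
  ∀ ψ : Fml U B, IsGF2Sentence SU SB ψ → Entails φ₂ ψ → Entails φ₁ ψ

/-- atomic formulas in the variables x, y -/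
inductive Atom2 (U B : Type) : Type
  | ua : U → Var → Atom2 U B
  | ba : B → Var → Var → Atom2 U B

def vval {D : Type} (a a' : D) : Var → D
  | .x => a
  | .y => a'

def Atom2.inSig {U B : Type} (SU : Set U) (SB : Set B) : Atom2 U B → Prop
  | .ua P _ => P ∈ SU
  | .ba R _ _ => R ∈ SB

def Atom2.holds {U B : Type} (A : Str U B) (a a' : A.Dom) : Atom2 U B → Prop
  | .ua P v => A.u P (vval a a' v)
  | .ba R v w => A.b R (vval a a' v) (vval a a' w)

def Atom2.onlyX {U B : Type} : Atom2 U B → Prop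
  | .ua _ v => v = Var.x
  | .ba _ v w => v = Var.x ∧ w = Var.x

/-- the atomic 1-type of `a` for the signature `(SU, SB)` (the set of
Σ-atoms in the single variable x satisfied by `a`; this determines the set of
negated atoms as well) -/
def atp1 {U B : Type} (A : Str U B) (SU : Set U) (SB : Set B) (a : A.Dom) :
    Set (Atom2 U B) :=
  {α | α.onlyX ∧ α.inSig SU SB ∧ α.holds A a a}

/-- the atomic 2-type of `(a, a')` for the signature `(SU, SB)` (the set of
Σ-atoms in x, y satisfied by `(a, a')`; together with `a ≠ a'` this determines
the atomic 2-type) -/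
def atp2 {U B : Type} (A : Str U B) (SU : Set U) (SB : Set B) (a a' : A.Dom) :
    Set (Atom2 U B) :=
  {α | α.inSig SU SB ∧ α.holds A a a'}

/-- the atomic 2-type of `(a, a')` is guarded (contains `R x y` or `R y x`
for some binary `R ∈ SB`) -/
def Guarded2 {U B : Type} (A : Str U B) (SB : Set B) (a a' : A.Dom) : Prop :=
  ∃ R ∈ SB, A.b R a a' ∨ A.b R a' a

/-- GF²(Σ)-bisimulation between structures `A` and `Bm` -/
structure IsBisim {U B : Type} (A Bm : Str U B) (SU : Set U) (SB : Set B)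
    (Z : A.Dom → Bm.Dom → Prop) : Prop where
  atom_eq : ∀ {a b}, Z a b → atp1 A SU SB a = atp1 Bm SU SB b
  forth : ∀ {a b}, Z a b → ∀ a', a' ≠ a → Guarded2 A SB a a' →
      ∃ b', b' ≠ b ∧ atp2 A SU SB a a' = atp2 Bm SU SB b b' ∧ Z a' b'
  back : ∀ {a b}, Z a b → ∀ b', b' ≠ b → Guarded2 Bm SB b b' →
      ∃ a', a' ≠ a ∧ atp2 A SU SB a a' = atp2 Bm SU SB b b' ∧ Z a' b'

/-- `(A, a) ∼_Σ (Bm, b)` -/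
def Bisim {U B : Type} (A Bm : Str U B) (SU : Set U) (SB : Set B)
    (a : A.Dom) (b : Bm.Dom) : Prop :=
  ∃ Z, IsBisim A Bm SU SB Z ∧ Z a b

/-- `(A, a) ∼ᵏ_Σ (Bm, b)` : k-GF²(Σ)-bisimilarity -/
def KBisim {U B : Type} (A Bm : Str U B) (SU : Set U) (SB : Set B) :
    ℕ → A.Dom → Bm.Dom → Prop
  | 0, a, b => atp1 A SU SB a = atp1 Bm SU SB b
  | k+1, a, b => atp1 A SU SB a = atp1 Bm SU SB b ∧
      (∀ a', a' ≠ a → Guarded2 A SB a a' →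
        ∃ b', b' ≠ b ∧ atp2 A SU SB a a' = atp2 Bm SU SB b b' ∧
          KBisim A Bm SU SB k a' b') ∧
      (∀ b', b' ≠ b → Guarded2 Bm SB b b' →
        ∃ a', a' ≠ a ∧ atp2 A SU SB a a' = atp2 Bm SU SB b b' ∧
          KBisim A Bm SU SB k a' b')

/-- a (full-signature) atomic 2-type, given as its set of positive atoms,
is guarded -/
def Guarded2Type {U B : Type} (τ : Set (Atom2 U B)) : Prop :=
  ∃ R : B, Atom2.ba R Var.x Var.y ∈ τ ∨ Atom2.ba R Var.y Var.x ∈ τ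

/-- successor-saturated structures -/
def SuccSaturated {U B : Type} (A : Str U B) : Prop :=
  ∀ (a : A.Dom) (τ : Set (Atom2 U B)) (Γ : Set (Fml U B)),
    Guarded2Type τ →
    (∀ ψ ∈ Γ, IsOpenGF2 ψ ∧ ψ.free = {Var.x}) →
    (∀ Γ' : Finset (Fml U B), ↑Γ' ⊆ Γ →
      ∃ a', a' ≠ a ∧ atp2 A Set.univ Set.univ a a' = τ ∧
        ∀ ψ ∈ Γ', Sat A ψ (fun _ => a')) →
    ∃ b', b' ≠ a ∧ atp2 A Set.univ Set.univ a b' = τ ∧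
      ∀ ψ ∈ Γ, Sat A ψ (fun _ => b')

/-- finite outdegree: every element stands in a guarded atomic 2-type (for the
full signature) to only finitely many elements -/
def FiniteOutdeg {U B : Type} (A : Str U B) : Prop :=
  ∀ a : A.Dom, {a' | a' ≠ a ∧ ∃ R : B, A.b R a a' ∨ A.b R a' a}.Finite

/-- Σ-adjacency (edges of the Gaifman graph of the Σ-reduct) -/
def SigAdj {U B : Type} (A : Str U B) (SB : Set B) (a a' : A.Dom) : Prop :=
  a ≠ a' ∧ ∃ R ∈ SB, A.b R a a' ∨ A.b R a' a

/-- A forest structure: a structure whose Gaifman graph is a forest, directed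
by choosing a root for each tree; `parent p c` says that `p` is the
predecessor (parent) of `c`. -/
structure Forest (U B : Type) extends Str U B where
  parent : Dom → Dom → Prop
  parent_unique : ∀ {c p p' : Dom}, parent p c → parent p' c → p = p'
  parent_wf : WellFounded parent
  adj_iff : ∀ a a' : Dom,
    (a ≠ a' ∧ ∃ R : B, b R a a' ∨ b R a' a) ↔ (parent a a' ∨ parent a' a)

namespace Forest

variable {U B : Type}

/-- `a` together with its descendants -/
def desc (F : Forest U B) (a : F.Dom) : Set F.Dom :=
  {c | Relation.ReflTransGen F.parent a c}

/-- the subtrees rooted at `a` and at `a'` are isomorphic -/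
def SubtreeIso (F : Forest U B) (a a' : F.Dom) : Prop :=
  ∃ f : (F.desc a) ≃ (F.desc a'),
    (f ⟨a, Relation.ReflTransGen.refl⟩).val = a' ∧
    (∀ c d : F.desc a, F.parent c.val d.val ↔ F.parent (f c).val (f d).val) ∧
    (∀ (P : U) (c : F.desc a), F.u P c.val ↔ F.u P (f c).val) ∧
    (∀ (R : B) (c d : F.desc a), F.b R c.val d.val ↔ F.b R (f c).val (f d).val)

/-- regular: only finitely many subtrees up to isomorphism -/
def Regular (F : Forest U B) : Prop :=
  ∃ S : Set F.Dom, S.Finite ∧ ∀ a, ∃ a' ∈ S, F.SubtreeIso a' a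

/-- `a ≺ a'` : `a` and `a'` lie in the same Σ-tree and `a` is a proper
ancestor of `a'` -/
def prec (F : Forest U B) (SB : Set B) (a a' : F.Dom) : Prop :=
  Relation.ReflTransGen (SigAdj F.toStr SB) a a' ∧ Relation.TransGen F.parent a a'

end Forest

/-- `a_⊥`-delimited GF²(Σ)-bisimulation: like a GF²(Σ)-bisimulation except that
the back-and-forth conditions are not required at pairs whose first component
is `abot` -/
structure IsPtDelimBisim {U B : Type} (A Bm : Str U B) (SU : Set U) (SB : Set B)
    (abot : A.Dom) (Z : A.Dom → Bm.Dom → Prop) : Prop where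
  atom_eq : ∀ {a b}, Z a b → atp1 A SU SB a = atp1 Bm SU SB b
  forth : ∀ {a b}, Z a b → a ≠ abot → ∀ a', a' ≠ a → Guarded2 A SB a a' →
      ∃ b', b' ≠ b ∧ atp2 A SU SB a a' = atp2 Bm SU SB b b' ∧ Z a' b'
  back : ∀ {a b}, Z a b → a ≠ abot → ∀ b', b' ≠ b → Guarded2 Bm SB b b' →
      ∃ a', a' ≠ a ∧ atp2 A SU SB a a' = atp2 Bm SU SB b b' ∧ Z a' b'

/-- `(A, a) ∼^{a_⊥}_Σ (Bm, b)` -/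
def PtDelimBisim {U B : Type} (A Bm : Str U B) (SU : Set U) (SB : Set B)
    (abot : A.Dom) (a : A.Dom) (b : Bm.Dom) : Prop :=
  ∃ Z, IsPtDelimBisim A Bm SU SB abot Z ∧ Z a b

/-- `A_⊥`-delimited GF²(Σ)-bisimulation between a forest structure `F` and a
structure `Bm`, given by a pair of relations `Z0 (∼⁰)` and `Z1 (∼¹)`. -/
structure IsDelimBisim {U B : Type} (F : Forest U B) (Bm : Str U B)
    (SU : Set U) (SB : Set B) (Abot : Set F.Dom)
    (Z0 Z1 : F.Dom → Bm.Dom → Prop) : Prop where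
  zero : ∀ {a b}, Z0 a b →
    atp1 F.toStr SU SB a = atp1 Bm SU SB b ∧
    (∀ a', a' ≠ a → Guarded2 F.toStr SB a a' →
      ∃ b', b' ≠ b ∧
        ((F.parent a' a ∧ a' ∈ Abot) → Z1 a' b') ∧
        (¬ (F.parent a' a ∧ a' ∈ Abot) → Z0 a' b')) ∧
    (∀ b', b' ≠ b → Guarded2 Bm SB b b' →
      ∃ a', a' ≠ a ∧
        ((F.parent a' a ∧ a' ∈ Abot) → Z1 a' b') ∧
        (¬ (F.parent a' a ∧ a' ∈ Abot) → Z0 a' b'))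
  one : ∀ {a b}, Z1 a b → (∀ p, F.parent p a → p ∉ Abot) →
    atp1 F.toStr SU SB a = atp1 Bm SU SB b ∧
    (∀ a', a' ≠ a → Guarded2 F.toStr SB a a' →
      ∃ b', b' ≠ b ∧
        ((F.parent a a' ∧ a ∈ Abot) → Z0 a' b') ∧
        (¬ (F.parent a a' ∧ a ∈ Abot) → Z1 a' b')) ∧
    (∀ b', b' ≠ b → Guarded2 Bm SB b b' →
      ∃ a', a' ≠ a ∧
        ((F.parent a a' ∧ a ∈ Abot) → Z0 a' b') ∧
        (¬ (F.parent a a' ∧ a ∈ Abot) → Z1 a' b'))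

/-- `(F, a) ∼^{A_⊥}_Σ (Bm, b)` -/
def DelimBisim {U B : Type} (F : Forest U B) (Bm : Str U B)
    (SU : Set U) (SB : Set B) (Abot : Set F.Dom) (a : F.Dom) (b : Bm.Dom) : Prop :=
  ∃ Z0 Z1, IsDelimBisim F Bm SU SB Abot Z0 Z1 ∧ Z0 a b

/-- `cl φ` : the subformulas of `φ` closed under single negation and renaming
of free variables (among x, y) -/
def clSet {U B : Type} (φ : Fml U B) : Set (Fml U B) :=
  {χ | ∃ ψ ∈ φ.Subf, ∃ f : Var → Var,
      χ = ψ.renameFree f ∨ χ = .neg (ψ.renameFree f)}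

/-- a 1-type for `φ₂`: a set of formulas `ψ(x)` from `cl φ₂` such that
`φ₂ ∧ ∃x ⋀ t(x)` is satisfiable -/
def OneType {U B : Type} (φ₂ : Fml U B) (t : Set (Fml U B)) : Prop :=
  t ⊆ clSet φ₂ ∧ (∀ ψ ∈ t, ψ.free ⊆ {Var.x}) ∧
  ∃ (A : Str U B) (a : A.Dom), SatS A φ₂ ∧ ∀ ψ ∈ t, Sat A ψ (fun _ => a)

/-- `tp_Bm(b)` : the 1-type of `b` in `Bm` (w.r.t. `φ₂`) -/
def tpOf {U B : Type} (Bm : Str U B) (φ₂ : Fml U B) (b : Bm.Dom) :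
    Set (Fml U B) :=
  {ψ | ψ ∈ clSet φ₂ ∧ ψ.free ⊆ {Var.x} ∧ Sat Bm ψ (fun _ => b)}

end GFC

namespace GFC

/-- Boolean combinations of sentences from `S` -/
inductive BoolComb {U B : Type} (S : Set (Fml U B)) : Fml U B → Prop
  | base {φ} : φ ∈ S → BoolComb S φ
  | neg {φ} : BoolComb S φ → BoolComb S (.neg φ)
  | conj {φ ψ} : BoolComb S φ → BoolComb S ψ → BoolComb S (.conj φ ψ)
  | disj {φ ψ} : BoolComb S φ → BoolComb S ψ → BoolComb S (.disj φ ψ)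

/-!
Call a formula binary guarded if it is built from atoms by `¬`, `→` and `∀v (R(a, b) → ·)` with
`a ≠ b`. Every subformula of such a formula has a free variable, so in a single variable it is an
openGF² formula. By induction, every GF² formula is a finite case distinction over sentences,
with binary guarded formulas as cases. An equality guard `x = y` merely substitutes one variable
for the other. A guard with only one variable turns the quantified subformula into a sentence,
which becomes a new test in the case distinction. The remaining guards `R(a, b)` commute with case
distinctions, because the truth of a sentence does not depend on the quantified element.
-/

variable {U B : Type}

namespace Var

/-- The other one of the two variables. -/
def other : Var → Var
  | x => y
  | y => x

theorem other_other (v : Var) : v.other.other = v := by cases v <;> rfl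

theorem other_inj {v w : Var} : v.other = w.other ↔ v = w := by
  cases v <;> cases w <;> simp [other]

theorem other_ne (v : Var) : v.other ≠ v := by cases v <;> simp [other]

theorem eq_other_iff_ne {v w : Var} : w = v.other ↔ w ≠ v := by
  cases v <;> cases w <;> simp [other]

theorem pair_eq_univ {v w : Var} (h : v ≠ w) : ({v, w} : Set Var) = Set.univ := by
  ext u
  cases u <;> cases v <;> cases w <;> simp_all

end Var

section Assignments

variable {D : Type} {σ τ : Var → D} {v w : Var} {d : D}

theorem upd_self : upd σ v d v = d := if_pos rfl

theorem upd_of_ne (h : w ≠ v) : upd σ v d w = σ w := if_neg h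

theorem eqOn_upd_upd {s : Set Var} (h : Set.EqOn σ τ (s \ {v})) :
    Set.EqOn (upd σ v d) (upd τ v d) s := by
  intro w hw
  by_cases hwv : w = v
  · rw [hwv, upd_self, upd_self]
  · rw [upd_of_ne hwv, upd_of_ne hwv, h ⟨hw, hwv⟩]

theorem upd_other_eq_const : upd σ v (σ v.other) = fun _ => σ v.other := by
  funext w
  by_cases hwv : w = v
  · rw [hwv, upd_self]
  · rw [upd_of_ne hwv, Var.eq_other_iff_ne.2 hwv]

theorem upd_apply_eq_upd_apply_iff {a b : Var} (hab : a ≠ b) :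
    upd σ v d a = upd σ v d b ↔ d = σ v.other := by
  cases a <;> cases b <;> cases v <;> simp_all [upd, Var.other, eq_comm]

theorem upd_other_comp_other : upd σ v.other d ∘ Var.other = upd (σ ∘ Var.other) v d := by
  funext w
  simp only [Function.comp, upd, Var.other_inj]

end Assignments

section FreeVariables

variable (A : Str U B) {φ : Fml U B} {σ τ : Var → A.Dom} {v : Var}

theorem sat_congr (h : Set.EqOn σ τ φ.free) : Sat A φ σ ↔ Sat A φ τ := by
  induction φ generalizing σ τ with
  | uatom P v => simp only [Sat, h (Set.mem_singleton v)]
  | batom R v w | eqv v w =>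
    simp only [Sat, h (Set.mem_insert v {w}), h (Set.mem_insert_of_mem v rfl)]
  | fls => rfl
  | neg φ ih => exact not_congr (ih h)
  | conj φ ψ ihφ ihψ =>
    exact and_congr (ihφ (h.mono Set.subset_union_left)) (ihψ (h.mono Set.subset_union_right))
  | disj φ ψ ihφ ihψ =>
    exact or_congr (ihφ (h.mono Set.subset_union_left)) (ihψ (h.mono Set.subset_union_right))
  | impl φ ψ ihφ ihψ =>
    exact imp_congr (ihφ (h.mono Set.subset_union_left)) (ihψ (h.mono Set.subset_union_right))
  | all v φ ih => exact forall_congr' fun _ => ih (eqOn_upd_upd h)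
  | ex v φ ih => exact exists_congr fun _ => ih (eqOn_upd_upd h)

theorem sat_iff_sat_const (hφ : φ.free ⊆ {v}) : Sat A φ σ ↔ Sat A φ fun _ => σ v :=
  sat_congr A fun _ hw => congrArg σ (hφ hw)

theorem satS_iff_forall_const (hφ : φ.free ⊆ {v}) :
    SatS A φ ↔ ∀ d, Sat A φ fun _ => d :=
  ⟨fun h d => h fun _ => d, fun h σ => (sat_iff_sat_const A hφ).2 (h (σ v))⟩

theorem forall_sat_upd_iff_forall_const (hφ : φ.free ⊆ {v}) :
    (∀ d, Sat A φ (upd σ v d)) ↔ ∀ d, Sat A φ fun _ => d :=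
  forall_congr' fun d => by rw [sat_iff_sat_const A hφ, upd_self]

theorem satS_iff_sat (hφ : φ.IsSentence) (σ : Var → A.Dom) : SatS A φ ↔ Sat A φ σ :=
  ⟨fun h => h σ, fun h _ => (sat_congr A (by rw [hφ]; exact Set.eqOn_empty _ _)).2 h⟩

end FreeVariables

theorem Fml.free_all_subset (v : Var) (φ : Fml U B) : (all v φ).free ⊆ {v.other} :=
  fun _ hw => Var.eq_other_iff_ne.2 hw.2

theorem BoolComb.isSentence {S : Set (Fml U B)} (hS : ∀ χ ∈ S, χ.IsSentence) {φ : Fml U B}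
    (h : BoolComb S φ) : φ.IsSentence := by
  induction h with
  | base hφ => exact hS _ hφ
  | neg _ ih => exact ih
  | conj _ _ ih ih' | disj _ _ ih ih' => exact Set.union_empty_iff.2 ⟨ih, ih'⟩

namespace Fml

/-- Exchange `x` and `y` throughout a formula, in bound as well as in free occurrences. Unlike
`renameFree`, this never captures a variable. -/
def swap : Fml U B → Fml U B
  | uatom P v => uatom P v.other
  | batom R v w => batom R v.other w.other
  | eqv v w => eqv v.other w.other
  | fls => fls
  | neg φ => neg φ.swap
  | conj φ ψ => conj φ.swap ψ.swap
  | disj φ ψ => disj φ.swap ψ.swap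
  | impl φ ψ => impl φ.swap ψ.swap
  | all v φ => all v.other φ.swap
  | ex v φ => ex v.other φ.swap

end Fml

theorem sat_swap (A : Str U B) (φ : Fml U B) (σ : Var → A.Dom) :
    Sat A φ.swap σ ↔ Sat A φ (σ ∘ Var.other) := by
  induction φ generalizing σ <;> simp_all [Sat, Fml.swap, upd_other_comp_other]

/-- Binary guarded formulas: the fragment of GF² in which every guard is a binary relational atom
with two distinct variables. Only `¬`, `→` and `∀` are used, and `⊥` is left out because it is a
sentence. -/
inductive IsBinaryGuarded : Fml U B → Prop
  | uatom (P : U) (v : Var) : IsBinaryGuarded (.uatom P v)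
  | batom (R : B) (v w : Var) : IsBinaryGuarded (.batom R v w)
  | eqv (v w : Var) : IsBinaryGuarded (.eqv v w)
  | neg {φ} : IsBinaryGuarded φ → IsBinaryGuarded (.neg φ)
  | impl {φ ψ} : IsBinaryGuarded φ → IsBinaryGuarded ψ → IsBinaryGuarded (.impl φ ψ)
  | all (v : Var) (R : B) {a b : Var} {φ} : a ≠ b → IsBinaryGuarded φ →
      IsBinaryGuarded (.all v (.impl (.batom R a b) φ))

namespace IsBinaryGuarded

variable {φ ψ : Fml U B}

theorem isGF2 (h : IsBinaryGuarded φ) : IsGF2 φ := by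
  induction h with
  | all v R hab _ ih =>
    refine .allG trivial ih ?_
    rw [Fml.free, Var.pair_eq_univ hab]
    exact Set.subset_univ _
  | _ => constructor <;> assumption

theorem free_nonempty (h : IsBinaryGuarded φ) : φ.free.Nonempty := by
  induction h with
  | uatom _ v => exact Set.singleton_nonempty v
  | batom _ v w | eqv v w => exact Set.insert_nonempty v {w}
  | neg _ ih => exact ih
  | impl _ _ ih _ => exact ih.inl
  | all v R hab _ _ =>
    refine ⟨v.other, Or.inl ?_, v.other_ne⟩
    rw [Fml.free, Var.pair_eq_univ hab]
    trivial

theorem of_mem_subf (h : IsBinaryGuarded φ) (hψ : ψ ∈ φ.Subf) : IsBinaryGuarded ψ := by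
  induction h with
  | uatom P v => exact hψ ▸ .uatom P v
  | batom R v w => exact hψ ▸ .batom R v w
  | eqv v w => exact hψ ▸ .eqv v w
  | neg h ih =>
    rcases hψ with rfl | hψ
    exacts [h.neg, ih hψ]
  | impl h h' ih ih' =>
    rcases hψ with rfl | hψ | hψ
    exacts [h.impl h', ih hψ, ih' hψ]
  | @all v R a b φ hab h ih =>
    rcases hψ with rfl | rfl | rfl | hψ
    exacts [.all v R hab h, (batom R a b).impl h, .batom R a b, ih hψ]

theorem isOpenGF2 (h : IsBinaryGuarded φ) {v : Var} (hφ : φ.free = {v}) : IsOpenGF2 φ := by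
  refine ⟨h.isGF2, ⟨v, hφ⟩, fun ψ hψ => (h.of_mem_subf hψ).free_nonempty.ne_empty, ?_⟩
  rintro ψ hψ w α χ (rfl | rfl)
  · cases h.of_mem_subf hψ
    exact not_false
  · cases h.of_mem_subf hψ

theorem swap (h : IsBinaryGuarded φ) : IsBinaryGuarded φ.swap := by
  induction h with
  | all v R hab _ ih => exact .all _ R (Var.other_inj.not.2 hab) ih
  | _ => constructor <;> assumption

theorem exists_sat_iff_sat_const (h : IsBinaryGuarded φ) (w : Var) :
    ∃ θ : Fml U B, IsBinaryGuarded θ ∧ θ.free = {w} ∧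
      ∀ (A : Str U B) (σ : Var → A.Dom), Sat A θ σ ↔ Sat A φ fun _ => σ w := by
  suffices ∃ θ : Fml U B, IsBinaryGuarded θ ∧ θ.free ⊆ {w} ∧
      ∀ (A : Str U B) (σ : Var → A.Dom), Sat A θ σ ↔ Sat A φ fun _ => σ w by
    obtain ⟨θ, hθ, hfree, hsat⟩ := this
    exact ⟨θ, hθ, hθ.free_nonempty.subset_singleton_iff.1 hfree, hsat⟩
  induction h with
  | uatom P v => exact ⟨_, .uatom P w, subset_rfl, fun _ _ => Iff.rfl⟩
  | batom R v v' => exact ⟨_, .batom R w w, by simp [Fml.free], fun _ _ => Iff.rfl⟩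
  | eqv v v' => exact ⟨_, .eqv w w, by simp [Fml.free], fun _ _ => by simp only [Sat]⟩
  | neg _ ih =>
    obtain ⟨θ, hθ, hfree, hsat⟩ := ih
    exact ⟨_, hθ.neg, hfree, fun A σ => not_congr (hsat A σ)⟩
  | impl _ _ ih ih' =>
    obtain ⟨θ, hθ, hfree, hsat⟩ := ih
    obtain ⟨θ', hθ', hfree', hsat'⟩ := ih'
    exact ⟨_, hθ.impl hθ', Set.union_subset hfree hfree',
      fun A σ => imp_congr (hsat A σ) (hsat' A σ)⟩
  | @all v R a b φ hab h _ =>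
    set χ : Fml U B := .all v (.impl (.batom R a b) φ)
    have hχ : IsBinaryGuarded χ := .all v R hab h
    have hχfree : χ.free ⊆ {v.other} := Fml.free_all_subset v _
    by_cases hwv : w = v
    · subst hwv
      have hswap : χ.swap.free ⊆ {w} := (Fml.free_all_subset _ _).trans_eq (by rw [w.other_other])
      refine ⟨χ.swap, hχ.swap, hswap, fun A σ => ?_⟩
      rw [sat_swap, sat_iff_sat_const A hχfree, Function.comp, w.other_other]
    · rw [← Var.eq_other_iff_ne.2 hwv] at hχfree
      exact ⟨χ, hχ, hχfree, fun A σ => sat_iff_sat_const A hχfree⟩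

end IsBinaryGuarded

/-- The sentences `∀x θ(x)` with `θ(x)` an openGF² formula. -/
abbrev universalOpen (U B : Type) : Set (Fml U B) :=
  {χ | ∃ θ : Fml U B, IsOpenGF2 θ ∧ θ.free = {Var.x} ∧ χ = .all Var.x θ}

theorem isSentence_of_mem_universalOpen {χ : Fml U B} (h : χ ∈ universalOpen U B) :
    χ.IsSentence := by
  obtain ⟨θ, -, hθ, rfl⟩ := h
  rw [Fml.IsSentence, Fml.free, hθ, Set.sdiff_self]

/-- Semantic counterparts of formulas: a property of assignments in every structure. -/
abbrev Query (U B : Type) : Type 1 := ∀ A : Str U B, (Var → A.Dom) → Prop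

open Classical in
/-- Queries computed by a finite decision tree whose inner nodes test Boolean combinations of
universal open sentences and whose leaves are binary guarded formulas. -/
inductive HasDecisionTree : Query U B → Prop
  | leaf {θ : Fml U B} : IsBinaryGuarded θ → HasDecisionTree fun A => Sat A θ
  | node {χ : Fml U B} {F G : Query U B} : BoolComb (universalOpen U B) χ →
      HasDecisionTree F → HasDecisionTree G →
      HasDecisionTree fun A => if SatS A χ then F A else G A

namespace HasDecisionTree

variable {F G : Query U B} {α φ : Fml U B} {v : Var}

theorem congr (h : HasDecisionTree F) (hFG : ∀ A σ, F A σ ↔ G A σ) : HasDecisionTree G := by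
  have hF_eq : F = G := funext fun A => funext fun σ => propext (hFG A σ)
  exact hF_eq ▸ h

/-- The tests depend on the structure only, so every operation that acts structure by structure
can be moved past them to the leaves. -/
theorem map (Φ : ∀ A : Str U B, ((Var → A.Dom) → Prop) → (Var → A.Dom) → Prop)
    (hΦ : ∀ θ : Fml U B, IsBinaryGuarded θ → HasDecisionTree fun A => Φ A (Sat A θ))
    (h : HasDecisionTree F) : HasDecisionTree fun A => Φ A (F A) := by
  induction h with
  | leaf hθ => exact hΦ _ hθ
  | node hχ _ _ ih ih' => simpa only [apply_ite] using node hχ ih ih'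

theorem neg (h : HasDecisionTree F) : HasDecisionTree fun A σ => ¬ F A σ :=
  h.map (fun _ P σ => ¬ P σ) fun _ hθ => leaf hθ.neg

theorem imp (hF : HasDecisionTree F) (hG : HasDecisionTree G) :
    HasDecisionTree fun A σ => F A σ → G A σ :=
  hF.map (fun A P σ => P σ → G A σ) fun θ hθ =>
    hG.map (fun A P σ => Sat A θ σ → P σ) fun _ hθ' => leaf (hθ.impl hθ')

theorem const_apply (h : HasDecisionTree F) (w : Var) :
    HasDecisionTree fun A σ => F A fun _ => σ w :=
  h.map (fun _ P σ => P fun _ => σ w) fun _ hθ => by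
    obtain ⟨θ', hθ', -, hsat⟩ := hθ.exists_sat_iff_sat_const w
    exact (leaf hθ').congr hsat

theorem true : HasDecisionTree (U := U) (B := B) fun _ _ => True :=
  (leaf (.eqv .x .x)).congr fun _ _ => by simp only [Sat]

theorem exists_boolComb (h : HasDecisionTree F) :
    ∃ ψ, BoolComb (universalOpen U B) ψ ∧
      ∀ A : Str U B, (∀ d, F A fun _ => d) ↔ SatS A ψ := by
  induction h with
  | leaf hθ =>
    obtain ⟨θ', hθ', hfree, hsat⟩ := hθ.exists_sat_iff_sat_const .x
    have hmem : Fml.all .x θ' ∈ universalOpen U B := ⟨θ', hθ'.isOpenGF2 hfree, hfree, rfl⟩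
    refine ⟨_, .base hmem, fun A => ?_⟩
    obtain ⟨d⟩ := A.nonempty
    rw [satS_iff_sat A (isSentence_of_mem_universalOpen hmem) fun _ => d]
    simp only [Sat, hsat, upd_self]
  | @node χ F G hχ _ _ ih ih' =>
    obtain ⟨ψ, hψ, hF⟩ := ih
    obtain ⟨ψ', hψ', hG⟩ := ih'
    have isSentence {ξ : Fml U B} : BoolComb (universalOpen U B) ξ → ξ.IsSentence :=
      BoolComb.isSentence fun _ => isSentence_of_mem_universalOpen
    have hcases := (hχ.conj hψ).disj (hχ.neg.conj hψ')
    refine ⟨_, hcases, fun A => ?_⟩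
    obtain ⟨d⟩ := A.nonempty
    rw [satS_iff_sat A (isSentence hcases) fun _ => d]
    simp only [Sat]
    rw [← satS_iff_sat A (isSentence hχ), ← satS_iff_sat A (isSentence hψ),
      ← satS_iff_sat A (isSentence hψ'), ← hF, ← hG]
    by_cases hA : SatS A χ <;> simp [hA]

theorem forall_const (h : HasDecisionTree F) : HasDecisionTree fun A _ => ∀ d, F A fun _ => d := by
  obtain ⟨ψ, hψ, hF⟩ := h.exists_boolComb
  exact (node hψ true true.neg).congr fun A σ => by
    by_cases hA : SatS A ψ <;> simp [hF, hA]

theorem all_of_free_subset (h : HasDecisionTree fun A => Sat A φ) (hφ : φ.free ⊆ {v}) :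
    HasDecisionTree fun A => Sat A (.all v φ) :=
  h.forall_const.congr fun A _ => (forall_sat_upd_iff_forall_const A hφ).symm

theorem all_batom_impl (h : HasDecisionTree fun A => Sat A φ) (v : Var) (R : B) {a b : Var}
    (hab : a ≠ b) : HasDecisionTree fun A => Sat A (.all v (.impl (.batom R a b) φ)) :=
  h.map (fun A P σ => ∀ d, Sat A (.batom R a b) (upd σ v d) → P (upd σ v d))
    fun _ hθ => leaf (.all v R hab hθ)

theorem all_eqv_impl (h : HasDecisionTree fun A => Sat A φ) (v : Var) {a b : Var} (hab : a ≠ b) :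
    HasDecisionTree fun A => Sat A (.all v (.impl (.eqv a b) φ)) :=
  (h.const_apply v.other).congr fun A σ => by
    simp only [Sat, upd_apply_eq_upd_apply_iff hab, forall_eq, upd_other_eq_const]

theorem all_guard_impl (h : HasDecisionTree fun A => Sat A φ) (hα : α.IsAtom)
    (hguard : φ.free ∪ {v} ⊆ α.free) : HasDecisionTree fun A => Sat A (.all v (.impl α φ)) := by
  have hv : v ∈ α.free := hguard (Or.inr rfl)
  have unary_guard (hαtree : HasDecisionTree fun A => Sat A α) (hαfree : α.free ⊆ {v}) :
      HasDecisionTree fun A => Sat A (.all v (.impl α φ)) :=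
    (hαtree.imp h).all_of_free_subset
      (Set.union_subset hαfree ((Set.subset_union_left.trans hguard).trans hαfree))
  cases α with
  | uatom P u => exact unary_guard (leaf (.uatom P u)) (by simpa [Fml.free, eq_comm] using hv)
  | batom R a b =>
    by_cases hab : a = b
    · exact unary_guard (leaf (.batom R a b)) (by simp_all [Fml.free])
    · exact h.all_batom_impl v R hab
  | eqv a b =>
    by_cases hab : a = b
    · exact unary_guard (leaf (.eqv a b)) (by simp_all [Fml.free])
    · exact h.all_eqv_impl v hab
  | _ => exact hα.elim

theorem of_isGF2 (h : IsGF2 φ) : HasDecisionTree fun A => Sat A φ := by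
  induction h with
  | uatom P v => exact leaf (.uatom P v)
  | batom R v w => exact leaf (.batom R v w)
  | eqv v w => exact leaf (.eqv v w)
  | fls => exact true.neg.congr fun _ _ => not_true
  | neg _ ih => exact ih.neg
  | conj _ _ ih ih' => exact (ih.imp ih'.neg).neg.congr fun _ _ => by simp only [Sat]; tauto
  | disj _ _ ih ih' => exact (ih.neg.imp ih').congr fun _ _ => or_iff_not_imp_left.symm
  | impl _ _ ih ih' => exact ih.imp ih'
  | allG hα _ hguard ih => exact ih.all_guard_impl hα hguard
  | @exG v α φ hα _ hguard ih =>
    have hneg : HasDecisionTree fun A => Sat A (.all v (.impl α φ.neg)) :=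
      all_guard_impl ih.neg hα hguard
    exact hneg.neg.congr fun A σ => by simp [Sat]

end HasDecisionTree

theorem every_gf2_sentence_equiv_boolComb_of_universal_open_general
    (φ : Fml U B) (hgf : IsGF2 φ) {v : Var} (hfree : φ.free ⊆ {v}) :
    ∃ ψ : Fml U B, BoolComb (universalOpen U B) ψ ∧ ∀ A : Str U B, SatS A φ ↔ SatS A ψ := by
  obtain ⟨ψ, hψ, hequiv⟩ := (HasDecisionTree.of_isGF2 hgf).exists_boolComb
  exact ⟨ψ, hψ, fun A => (satS_iff_forall_const A hfree).trans (hequiv A)⟩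

/-- Every GF² sentence is logically equivalent to a Boolean
combination of sentences of the form `∀x φ(x)` with `φ(x)` an openGF² formula. -/
theorem every_gf2_sentence_equiv_boolComb_of_universal_open
    {U B : Type} (φ : Fml U B) (hgf : IsGF2 φ) (hsen : φ.IsSentence) :
    ∃ ψ : Fml U B,
      BoolComb {χ | ∃ θ : Fml U B, IsOpenGF2 θ ∧ θ.free = {Var.x} ∧
                    χ = .all Var.x θ} ψ ∧
      (∀ A : Str U B, SatS A φ ↔ SatS A ψ) :=
  every_gf2_sentence_equiv_boolComb_of_universal_open_general φ hgf
    (hsen ▸ Set.empty_subset {Var.x})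

end GFC
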